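/- Let Y_{2r} ⊂ ℙ^{2r+1} be the cubic hypersurface defined by f = x_{r+1}² x₀ + x_{r+2} Q₁(x₀,…,x_{2r+1}) + … + x_{2r+1} Q_r(x₀,…,x_{2r+1}), where Q₁,…,Q_r are homogeneous quadrics. Then every singular point x of Y_{2r} satisfies x_{r+1} = x_{r+2} = … = x_{2r+1} = 0 and Q₁(x) = … = Q_r(x) = 0; conversely every point of ℙ^{2r+1} satisfying these equations is a singular point of Y_{2r}. For general Q₁,…,Q_r this is a finite set of 2^r points. -/

import Mathlib

open MvPolynomial

noncomputable section

/-- An (affine) algebraic subset of `ℂ^ι`: the common zero locus of a set of polynomials. -/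
def IsAlgSet {ι : Type*} (S : Set (ι → ℂ)) : Prop :=
  ∃ T : Set (MvPolynomial ι ℂ), S = {x | ∀ p ∈ T, eval x p = 0}

/-- Irreducibility of a set in the Zariski sense. -/
def AlgIrreducible {ι : Type*} (S : Set (ι → ℂ)) : Prop :=
  S.Nonempty ∧ ∀ A B : Set (ι → ℂ), IsAlgSet A → IsAlgSet B →
    S ⊆ A ∪ B → S ⊆ A ∨ S ⊆ B

/-- Krull dimension of a set, via chains of irreducible algebraic subsets. -/
def algDim {ι : Type*} (S : Set (ι → ℂ)) : WithBot ℕ∞ :=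
  Order.krullDim {T : Set (ι → ℂ) // IsAlgSet T ∧ AlgIrreducible T ∧ T ⊆ S}

/-- A polynomial function on a complex vector space. -/
def IsPolynomialFun {M : Type*} [AddCommGroup M] [Module ℂ M] (g : M → ℂ) : Prop :=
  ∃ (k : ℕ) (l : Fin k → (M →ₗ[ℂ] ℂ)) (p : MvPolynomial (Fin k) ℂ),
    ∀ m, g m = eval (fun i => l i m) p

/-- A Zariski-open subset of a complex vector space: the complement of a common zero
locus of polynomial functions. -/
def IsZariskiOpen {M : Type*} [AddCommGroup M] [Module ℂ M] (U : Set M) : Prop :=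
  ∃ T : Set (M → ℂ), (∀ g ∈ T, IsPolynomialFun g) ∧ Uᶜ = {m | ∀ g ∈ T, g m = 0}

set_option synthInstance.maxHeartbeats 1000000

/-- The cubic form `f = x_{r+1}² x₀ + x_{r+2} Q₁ + … + x_{2r+1} Q_r` on `ℙ^{2r+1}`. -/
def cubicForm (r : ℕ) (Q : Fin r → MvPolynomial (Fin (2 * r + 2)) ℂ) :
    MvPolynomial (Fin (2 * r + 2)) ℂ :=
  X (⟨r + 1, by omega⟩ : Fin (2 * r + 2)) ^ 2 * X (⟨0, by omega⟩ : Fin (2 * r + 2)) +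
    ∑ i : Fin r, X (⟨r + 2 + (i : ℕ), by have := i.isLt; omega⟩ : Fin (2 * r + 2)) * Q i

/-!
On the blowup of the linear space `y = 0`, where `y_j := x_{r+1+j}`, write `y = s η` and divide the
partial derivatives of `f` along `x₀, …, x_r, y₀` by `s`. The tuple `Q` is *nondegenerate* if the
resulting bihomogeneous equations have only irrelevant zeros; by elimination theory this is a
Zariski open condition on `Q`. For nondegenerate `Q`, the case `s = 1` says that every singular
point has `y = 0`, and the case `s = 0`, in which `η` records a linear relation among the
differentials of the quadrics, says that `Q₁, …, Q_r` meet transversally on `y = 0`, with no common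
zero on `x₀ = 0`.

The number of common zeros is locally constant on nondegenerate tuples, by the implicit function
theorem and properness. The line joining two nondegenerate tuples is a copy of `ℂ` meeting the
degenerate ones in finitely many points, and the complement of these is connected, so the count is
the same for all nondegenerate tuples. The explicit tuple `witness r` has `2 ^ r` common zeros.
-/

section PolynomialFunctions

variable {M : Type*} [AddCommGroup M] [Module ℂ M]

namespace IsPolynomialFun

lemma const (c : ℂ) : IsPolynomialFun fun _ : M => c :=
  ⟨0, Fin.elim0, C c, fun _ => by simp⟩

lemma of_isLinearMap {g : M → ℂ} (hg : IsLinearMap ℂ g) : IsPolynomialFun g :=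
  ⟨1, fun _ => hg.mk' g, X 0, fun _ => by simp⟩

lemma add {f g : M → ℂ} (hf : IsPolynomialFun f) (hg : IsPolynomialFun g) :
    IsPolynomialFun (f + g) := by
  obtain ⟨k, l, p, hp⟩ := hf
  obtain ⟨k', l', p', hp'⟩ := hg
  refine ⟨k + k', Fin.append l l', rename (Fin.castAdd k') p + rename (Fin.natAdd k) p',
    fun m => ?_⟩
  rw [Pi.add_apply, hp, hp', map_add, eval_rename, eval_rename]
  congr 2 <;> (congr 1; ext i; simp)

lemma mul {f g : M → ℂ} (hf : IsPolynomialFun f) (hg : IsPolynomialFun g) :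
    IsPolynomialFun (f * g) := by
  obtain ⟨k, l, p, hp⟩ := hf
  obtain ⟨k', l', p', hp'⟩ := hg
  refine ⟨k + k', Fin.append l l', rename (Fin.castAdd k') p * rename (Fin.natAdd k) p',
    fun m => ?_⟩
  rw [Pi.mul_apply, hp, hp', map_mul, eval_rename, eval_rename]
  congr 2 <;> (congr 1; ext i; simp)

/-- The algebra of polynomial functions on a complex vector space, so that the library's closure
lemmas for subalgebras and the formula for determinants under ring homomorphisms apply. -/
def subalgebra (M : Type*) [AddCommGroup M] [Module ℂ M] : Subalgebra ℂ (M → ℂ) where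
  carrier := {g | IsPolynomialFun g}
  add_mem' := .add
  mul_mem' := .mul
  algebraMap_mem' := .const

lemma det {ι : Type*} [Fintype ι] [DecidableEq ι] {A : M → Matrix ι ι ℂ}
    (hA : ∀ i j, IsPolynomialFun fun m => A m i j) : IsPolynomialFun fun m => (A m).det := by
  let B : Matrix ι ι (subalgebra M) := .of fun i j => ⟨fun m => A m i j, hA i j⟩
  suffices (fun m => (A m).det) = B.det from this ▸ B.det.2
  funext m
  exact (((Pi.evalRingHom (fun _ : M => ℂ) m).comp
    (subalgebra M).val.toRingHom).map_det B).symm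

lemma finite_setOf_lineMap_eq_zero {g : M → ℂ} (hg : IsPolynomialFun g) {a : M} (ha : g a ≠ 0)
    (b : M) : {t : ℂ | g (AffineMap.lineMap a b t) = 0}.Finite := by
  obtain ⟨k, l, p, hp⟩ := hg
  let q : Polynomial ℂ := aeval (fun i => .C (l i a) + .X * .C (l i b - l i a)) p
  have eval_q (t : ℂ) : q.eval t = g (AffineMap.lineMap a b t) := by
    rw [hp, ← Polynomial.coe_aeval_eq_eval, comp_aeval_apply, ← aeval_eq_eval]
    simp [AffineMap.lineMap_apply, add_comm]
  have hq : q ≠ 0 := fun h => ha <| by simpa [h] using (eval_q 0).symm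
  exact (Polynomial.finite_setOfPred_isRoot hq).subset fun t ht => (eval_q t).trans ht

end IsPolynomialFun

namespace IsZariskiOpen

lemma of_forall_exists {U : Set M}
    (h : ∀ a ∈ U, ∃ g, IsPolynomialFun g ∧ g a ≠ 0 ∧ ∀ b, g b ≠ 0 → b ∈ U) :
    IsZariskiOpen U := by
  refine ⟨{g | IsPolynomialFun g ∧ ∀ b, g b ≠ 0 → b ∈ U}, fun g hg => hg.1, ?_⟩
  ext a
  refine ⟨fun ha g hg => not_not.1 fun hga => ha (hg.2 a hga), fun ha haU => ?_⟩
  obtain ⟨g, hg, hga, hgU⟩ := h a haU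
  exact hga (ha g ⟨hg, hgU⟩)

lemma finite_setOf_lineMap_notMem {U : Set M} (hU : IsZariskiOpen U) {a : M} (ha : a ∈ U) (b : M) :
    {t : ℂ | AffineMap.lineMap a b t ∉ U}.Finite := by
  obtain ⟨T, hT, hUT⟩ := hU
  obtain ⟨g, hgT, hga⟩ : ∃ g ∈ T, g a ≠ 0 := by
    by_contra! h
    exact (hUT.symm ▸ h : a ∈ Uᶜ) ha
  refine ((hT g hgT).finite_setOf_lineMap_eq_zero hga b).subset fun t ht => ?_
  exact (hUT ▸ ht : AffineMap.lineMap a b t ∈ {m | ∀ g ∈ T, g m = 0}) g hgT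

end IsZariskiOpen

end PolynomialFunctions

section Elimination

variable {σ K D R : Type*} [AddCommMonoid D] {w : σ → D} [CommSemiring R]

lemma eval_weightedHomogeneousComponent_mul_eq_zero {p : MvPolynomial σ R} {d : D}
    (hp : IsWeightedHomogeneous w p d) {z : σ → R} (hz : eval z p = 0) (a : MvPolynomial σ R)
    (n : D) : eval z (weightedHomogeneousComponent w n (a * p)) = 0 := by
  classical
  induction a using MvPolynomial.induction_on' with
  | monomial γ c =>
    have hom : IsWeightedHomogeneous w (monomial γ c * p) (Finsupp.weight w γ + d) :=
      (isWeightedHomogeneous_monomial w γ c rfl).mul hp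
    rw [weightedHomogeneousComponent_of_mem hom]
    split_ifs <;> simp [hz]
  | add a b ha hb => rw [add_mul, map_add, map_add, ha, hb, add_zero]

lemma eval_weightedHomogeneousComponent_eq_sum {n : D} {s : Finset (σ →₀ ℕ)}
    (hs : ∀ γ, γ ∈ s ↔ Finsupp.weight w γ = n) (p : MvPolynomial σ R) (z : σ → R) :
    eval z (weightedHomogeneousComponent w n p) =
      ∑ γ ∈ s, coeff γ p * eval z (monomial γ 1) := by
  classical
  rw [weightedHomogeneousComponent_apply, map_sum]
  refine Finset.sum_subset_zero_on_sdiff (fun γ hγ => (hs γ).2 (Finset.mem_filter.1 hγ).2)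
    (fun γ hγ => ?_) fun γ _ => by simp [eval_monomial]
  have hγp : coeff γ p = 0 := by
    by_contra h
    rw [Finset.mem_sdiff, Finset.mem_filter, mem_support_iff] at hγ
    exact hγ.2 ⟨h, (hs γ).1 hγ.1⟩
  rw [hγp, zero_mul]

variable {M : Type*} [AddCommGroup M] [Module ℂ M] {F : M → K → MvPolynomial σ ℂ}

lemma isPolynomialFun_coeff_sum_mul [Fintype K]
    (hF : ∀ k γ, IsPolynomialFun fun m => coeff γ (F m k)) (a : K → MvPolynomial σ ℂ)
    (γ : σ →₀ ℕ) : IsPolynomialFun fun m => coeff γ (∑ k, a k * F m k) := by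
  classical
  have : (fun m => coeff γ (∑ k, a k * F m k)) = ∑ k, ∑ e ∈ Finset.HasAntidiagonal.antidiagonal γ,
      (fun _ : M => coeff e.1 (a k)) * fun m => coeff e.2 (F m k) := by
    ext m
    simp [coeff_sum, coeff_mul]
  rw [this]
  exact (IsPolynomialFun.subalgebra M).sum_mem fun k _ =>
    (IsPolynomialFun.subalgebra M).sum_mem fun e _ => (IsPolynomialFun.const _).mul (hF k e.2)

-- The function is the determinant of the matrix expressing the monomials of weight `n` through
-- the forms `F m k` with multipliers chosen at `m₀`, where it is the identity matrix.
lemma exists_isPolynomialFun_forall_eval_monomial_eq_zero [Finite K] {n : D}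
    (hn : {γ : σ →₀ ℕ | Finsupp.weight w γ = n}.Finite) {d : K → D}
    (hom : ∀ m k, IsWeightedHomogeneous w (F m k) (d k))
    (hF : ∀ k γ, IsPolynomialFun fun m => coeff γ (F m k)) {m₀ : M}
    (h₀ : ∀ γ, Finsupp.weight w γ = n → monomial γ (1 : ℂ) ∈ Ideal.span (Set.range (F m₀))) :
    ∃ g : M → ℂ, IsPolynomialFun g ∧ g m₀ ≠ 0 ∧ ∀ m, g m ≠ 0 → ∀ z, (∀ k, eval z (F m k) = 0) →
      ∀ γ, Finsupp.weight w γ = n → eval z (monomial γ (1 : ℂ)) = 0 := by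
  classical
  cases nonempty_fintype K
  let s := hn.toFinset
  have mem_s (γ) : γ ∈ s ↔ Finsupp.weight w γ = n := hn.mem_toFinset
  choose a ha using fun γ : s =>
    Ideal.mem_span_range_iff_exists_fun.1 (h₀ γ ((mem_s γ).1 γ.2))
  let A (m : M) : Matrix s s ℂ := .of fun γ γ' => coeff γ' (∑ k, a γ k * F m k)
  refine ⟨fun m => (A m).det, .det fun γ γ' => isPolynomialFun_coeff_sum_mul hF (a γ) γ', ?_,
    fun m hm z hz γ hγ => ?_⟩
  · have A_eq_one : A m₀ = 1 := by
      ext γ γ'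
      simp only [A, Matrix.of_apply, ha, coeff_monomial, Matrix.one_apply, Subtype.ext_iff]
    simp [A_eq_one]
  · have mulVec_eq_zero : (A m).mulVec (fun γ => eval z (monomial γ.1 (1 : ℂ))) = 0 := by
      ext γ
      have := eval_weightedHomogeneousComponent_eq_sum mem_s (∑ k, a γ k * F m k) z
      rw [map_sum, map_sum, Finset.sum_eq_zero fun k _ =>
        eval_weightedHomogeneousComponent_mul_eq_zero (hom m k) (hz k) _ _,
        ← Finset.sum_coe_sort] at this
      exact this.symm
    exact congrFun (Matrix.eq_zero_of_mulVec_eq_zero hm mulVec_eq_zero) ⟨γ, (mem_s γ).2 hγ⟩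

end Elimination

section BigradedElimination

variable {α β K : Type*}

/-- The bigrading in which the variables indexed by `β` have degree `(0, 1)` and those indexed by
`α` have degree `(1, a i)`: the Cox grading of a projective space bundle over a projective space. -/
def bundleWeight (a : α → ℕ) : α ⊕ β → ℕ × ℕ :=
  Sum.elim (fun i => (1, a i)) fun _ => (0, 1)

variable (α β) in
/-- The irrelevant ideal of the bigrading `bundleWeight`: its zero locus consists of the points
whose `α`-coordinates or whose `β`-coordinates all vanish. -/
def irrelevantIdeal : Ideal (MvPolynomial (α ⊕ β) ℂ) :=
  Ideal.span (Set.range fun i => X (.inl i)) * Ideal.span (Set.range fun k => X (.inr k))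

lemma weight_bundleWeight [Fintype α] [Fintype β] (a : α → ℕ) (γ : α ⊕ β →₀ ℕ) :
    Finsupp.weight (bundleWeight a) γ =
      (∑ i, γ (.inl i), ∑ i, γ (.inl i) * a i + ∑ k, γ (.inr k)) := by
  rw [Finsupp.weight_eq_sum]
  ext <;> simp [Fintype.sum_sum_type, bundleWeight, Prod.fst_sum, Prod.snd_sum]

lemma prod_pow_mem_span_range_pow {R ι : Type*} [CommSemiring R] [Fintype ι] (x : ι → R)
    {e : ι → ℕ} {n : ℕ} (hn : n ≤ ∑ i, e i) : ∏ i, x i ^ e i ∈ Ideal.span (Set.range x) ^ n := by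
  refine Ideal.pow_le_pow_right hn ?_
  rw [← Finset.prod_pow_eq_pow_sum]
  exact Ideal.prod_mem_prod fun i _ =>
    Ideal.pow_mem_pow (Ideal.subset_span (Set.mem_range_self i)) _

lemma monomial_mem_irrelevantIdeal_pow [Fintype α] [Fintype β] {γ : α ⊕ β →₀ ℕ} {n : ℕ}
    (hα : n ≤ ∑ i, γ (.inl i)) (hβ : n ≤ ∑ k, γ (.inr k)) :
    monomial γ (1 : ℂ) ∈ irrelevantIdeal α β ^ n := by
  rw [monomial_eq, Finsupp.prod_fintype _ _ (fun _ => pow_zero _), Fintype.prod_sum_type, C_1,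
    one_mul, irrelevantIdeal, mul_pow]
  exact Ideal.mul_mem_mul (prod_pow_mem_span_range_pow _ hα) (prod_pow_mem_span_range_pow _ hβ)

variable [Finite α] [Finite β]

lemma finite_setOf_weight_bundleWeight_eq (a : α → ℕ) (n : ℕ × ℕ) :
    {γ : α ⊕ β →₀ ℕ | Finsupp.weight (bundleWeight a) γ = n}.Finite := by
  cases nonempty_fintype α
  cases nonempty_fintype β
  refine (Finsupp.finite_of_degree_le (n.1 + n.2)).subset fun γ hγ => ?_
  rw [Set.mem_ofPred_eq, weight_bundleWeight, Prod.ext_iff] at hγ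
  rw [Set.mem_ofPred_eq, Finsupp.degree_eq_sum, Fintype.sum_sum_type]
  lia

lemma exists_irrelevantIdeal_pow_le_span {f : K → MvPolynomial (α ⊕ β) ℂ}
    (hf : ∀ z, (∀ k, eval z (f k) = 0) → z ∘ .inl = 0 ∨ z ∘ .inr = 0) :
    ∃ n, irrelevantIdeal α β ^ n ≤ Ideal.span (Set.range f) := by
  refine Ideal.exists_pow_le_of_le_radical_of_fg ?_ (IsNoetherian.noetherian _)
  rw [← vanishingIdeal_zeroLocus_eq_radical (K := ℂ), irrelevantIdeal, Ideal.span_mul_span',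
    Ideal.span_le]
  rintro _ ⟨_, ⟨i, rfl⟩, _, ⟨k, rfl⟩, rfl⟩
  refine mem_vanishingIdeal_iff.2 fun z hz => ?_
  rcases hf z fun k => mem_zeroLocus_iff.1 hz _ (Ideal.subset_span ⟨k, rfl⟩) with h | h
  · simp [show z (.inl i) = 0 from congrFun h i]
  · simp [show z (.inr k) = 0 from congrFun h k]

lemma exists_forall_monomial_mem_of_irrelevantIdeal_pow_le {I : Ideal (MvPolynomial (α ⊕ β) ℂ)}
    {n : ℕ} (hI : irrelevantIdeal α β ^ n ≤ I) (a : α → ℕ) : ∃ c, (∀ i, a i ≤ c) ∧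
      ∀ γ, Finsupp.weight (bundleWeight a) γ = (n, c * n) → monomial γ (1 : ℂ) ∈ I := by
  cases nonempty_fintype α
  cases nonempty_fintype β
  refine ⟨Finset.univ.sup a + 1, fun i => (Finset.le_sup (Finset.mem_univ i)).trans (Nat.le_succ _),
    fun γ hγ => hI ?_⟩
  rw [weight_bundleWeight, Prod.mk.injEq] at hγ
  have sum_le : ∑ i, γ (.inl i) * a i ≤ n * Finset.univ.sup a := by
    rw [← hγ.1, Finset.sum_mul]
    exact Finset.sum_le_sum fun i hi => Nat.mul_le_mul_left _ (Finset.le_sup hi)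
  refine monomial_mem_irrelevantIdeal_pow hγ.1.ge ?_
  linarith

variable {M : Type*} [AddCommGroup M] [Module ℂ M] [Finite K]

theorem isZariskiOpen_setOf_forall_common_zero_irrelevant {a : α → ℕ} {d : K → ℕ × ℕ}
    {F : M → K → MvPolynomial (α ⊕ β) ℂ}
    (hom : ∀ m k, IsWeightedHomogeneous (bundleWeight a) (F m k) (d k))
    (hF : ∀ k γ, IsPolynomialFun fun m => coeff γ (F m k)) :
    IsZariskiOpen {m | ∀ z, (∀ k, eval z (F m k) = 0) → z ∘ .inl = 0 ∨ z ∘ .inr = 0} := by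
  refine .of_forall_exists fun m₀ hm₀ => ?_
  obtain ⟨n, hn⟩ := exists_irrelevantIdeal_pow_le_span hm₀
  obtain ⟨c, hc, hγ⟩ := exists_forall_monomial_mem_of_irrelevantIdeal_pow_le hn a
  obtain ⟨g, hg, hgm₀, hgF⟩ := exists_isPolynomialFun_forall_eval_monomial_eq_zero
    (finite_setOf_weight_bundleWeight_eq a (n, c * n)) hom hF hγ
  refine ⟨g, hg, hgm₀, fun m hm z hz => ?_⟩
  by_contra! h
  obtain ⟨i, hi⟩ := Function.ne_iff.1 h.1
  obtain ⟨k, hk⟩ := Function.ne_iff.1 h.2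
  have weight_eq : Finsupp.weight (bundleWeight a)
      (Finsupp.single (.inl i) n + Finsupp.single (.inr k) ((c - a i) * n)) = (n, c * n) := by
    obtain ⟨e, rfl⟩ := Nat.exists_eq_add_of_le (hc i)
    rw [map_add, Finsupp.weight_single, Finsupp.weight_single]
    ext <;> simp [bundleWeight, mul_add, mul_comm]
  have eval_eq_zero := hgF m hm z hz _ weight_eq
  rw [monomial_single_add, ← X_pow_eq_monomial, map_mul, map_pow, map_pow, eval_X, eval_X]
    at eval_eq_zero
  exact mul_ne_zero (pow_ne_zero _ hi) (pow_ne_zero _ hk) eval_eq_zero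

end BigradedElimination

section CountingFibres

open Filter Topology

variable {T E : Type*} [TopologicalSpace T] [TopologicalSpace E]

/-- Near the point `p`, the relation `S ⊆ T × E` is the graph of a function continuous at `p.1`:
the topological content of the implicit function theorem. -/
def IsGraphNear (S : Set (T × E)) (p : T × E) : Prop :=
  ∃ ψ : T → E, ContinuousAt ψ p.1 ∧ ψ p.1 = p.2 ∧ ∀ᶠ q in 𝓝 p, q ∈ S ↔ ψ q.1 = q.2

variable {S : Set (T × E)} {t₀ : T} {K : Set E}

lemma finite_fiber_of_isGraphNear [T2Space E] (hS : IsClosed S) (hK : IsCompact K)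
    (hSK : Prod.mk t₀ ⁻¹' S ⊆ K) (h : ∀ x, (t₀, x) ∈ S → IsGraphNear S (t₀, x)) :
    (Prod.mk t₀ ⁻¹' S).Finite := by
  have isolated (x) (hx : x ∈ Prod.mk t₀ ⁻¹' S) : {y | (t₀, y) ∈ S → y = x} ∈ 𝓝 x := by
    obtain ⟨ψ, -, hψx, hψ⟩ := h x hx
    filter_upwards [(Continuous.prodMk_right t₀).continuousAt.eventually hψ] with y hy hyS
    exact (hy.1 hyS).symm.trans hψx
  have compact : IsCompact (Prod.mk t₀ ⁻¹' S) :=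
    hK.of_isClosed_subset (hS.preimage (.prodMk_right t₀)) hSK
  obtain ⟨s, -, hs⟩ := compact.elim_nhds_subcover _ isolated
  refine s.finite_toSet.subset fun y hy => ?_
  obtain ⟨x, hx, hyx⟩ := Set.mem_iUnion₂.1 (hs hy)
  exact (hyx hy : y = x) ▸ hx

lemma eventually_forall_fiber_exists_eq (hS : IsClosed S) (hK : IsCompact K)
    (hSK : ∀ᶠ t in 𝓝 t₀, Prod.mk t ⁻¹' S ⊆ K) {ψ : E → T → E}
    (hψ : ∀ x, (t₀, x) ∈ S → ∀ᶠ q in 𝓝 (t₀, x), q ∈ S ↔ ψ x q.1 = q.2) :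
    ∀ᶠ t in 𝓝 t₀, ∀ y, (t, y) ∈ S → ∃ x, (t₀, x) ∈ S ∧ ψ x t = y := by
  have : ∀ᶠ t in 𝓝 t₀, ∀ y ∈ K, (t, y) ∈ S → ∃ x, (t₀, x) ∈ S ∧ ψ x t = y := by
    refine hK.eventually_forall_of_forall_eventually fun y _ => ?_
    by_cases hy : (t₀, y) ∈ S
    · filter_upwards [hψ y hy] with q hq hqS using ⟨y, hy, hq.1 hqS⟩
    · filter_upwards [hS.isOpen_compl.mem_nhds hy] with q hq hqS using absurd hqS hq
  filter_upwards [this, hSK] with t ht htK y hy using ht y (htK hy) hy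

theorem eventually_ncard_fiber_eq [T2Space E] (hS : IsClosed S) (hK : IsCompact K)
    (hSK : ∀ᶠ t in 𝓝 t₀, Prod.mk t ⁻¹' S ⊆ K) (h : ∀ x, (t₀, x) ∈ S → IsGraphNear S (t₀, x)) :
    ∀ᶠ t in 𝓝 t₀, (Prod.mk t ⁻¹' S).ncard = (Prod.mk t₀ ⁻¹' S).ncard := by
  have finite := finite_fiber_of_isGraphNear hS hK hSK.self_of_nhds h
  rcases isEmpty_or_nonempty E with _ | _
  · simp only [Set.eq_empty_of_isEmpty, eventually_true]
  choose! ψ ψ_cont ψ_t₀ hψ using h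
  obtain ⟨U, hU, U_disj⟩ := finite.t2_separation
  have branch : ∀ᶠ t in 𝓝 t₀, ∀ x ∈ Prod.mk t₀ ⁻¹' S, (t, ψ x t) ∈ S ∧ ψ x t ∈ U x := by
    refine (eventually_all_finite finite).2 fun x hx => ?_
    have tendsto_ψ : Tendsto (ψ x) (𝓝 t₀) (𝓝 x) := by
      simpa only [ContinuousAt, ψ_t₀ x hx] using ψ_cont x hx
    filter_upwards [(tendsto_id.prodMk_nhds tendsto_ψ).eventually (hψ x hx),
      tendsto_ψ.eventually ((hU x).2.mem_nhds (hU x).1)] with t ht htU using ⟨ht.2 rfl, htU⟩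
  filter_upwards [branch, eventually_forall_fiber_exists_eq hS hK hSK hψ] with t ht hsurj
  have fiber_eq : Prod.mk t ⁻¹' S = (ψ · t) '' (Prod.mk t₀ ⁻¹' S) :=
    Set.Subset.antisymm hsurj (Set.image_subset_iff.2 fun x hx => (ht x hx).1)
  have injOn : Set.InjOn (ψ · t) (Prod.mk t₀ ⁻¹' S) :=
    fun x hx y hy (hxy : ψ x t = ψ y t) => U_disj.elim_set hx hy _ (ht x hx).2 (hxy ▸ (ht y hy).2)
  rw [fiber_eq, injOn.ncard_image]

end CountingFibres

section ImplicitFunction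

open Topology

variable {𝕜 P E G : Type*} [RCLike 𝕜] [NormedAddCommGroup P] [NormedSpace 𝕜 P] [CompleteSpace P]
  [NormedAddCommGroup E] [NormedSpace 𝕜 E] [CompleteSpace E]
  [NormedAddCommGroup G] [NormedSpace 𝕜 G] [CompleteSpace G]

theorem isGraphNear_of_hasFDerivAt_isInvertible {F : P × E → G} {t : P} {x : E}
    (hF : ContDiffAt 𝕜 1 F (t, x)) (hFx : F (t, x) = 0) {F' : E →L[𝕜] G}
    (hF' : HasFDerivAt (fun y => F (t, y)) F' x) (hinv : F'.IsInvertible) :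
    IsGraphNear {q | F q = 0} (t, x) := by
  have strict := hF.hasStrictFDerivAt one_ne_zero
  have partial_eq : fderiv 𝕜 F (t, x) ∘L .inr 𝕜 P E = F' :=
    (strict.hasFDerivAt.comp x (hasFDerivAt_prodMk_right t x)).unique hF'
  have invertible : (fderiv 𝕜 F (t, x) ∘L .inr 𝕜 P E).IsInvertible := partial_eq ▸ hinv
  refine ⟨strict.implicitFunctionOfProdDomain invertible, ?_, ?_, ?_⟩
  · exact (strict.hasStrictFDerivAt_implicitFunctionOfProdDomain invertible).continuousAt
  · exact
      (strict.eventually_apply_eq_iff_implicitFunctionOfProdDomain invertible).self_of_nhds.1 rfl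
  · simpa only [Set.mem_ofPred_eq, hFx] using
      strict.eventually_apply_eq_iff_implicitFunctionOfProdDomain invertible

end ImplicitFunction

section PolynomialSystems

variable {ι : Type*} [Fintype ι]

lemma hasFDerivAt_eval {𝕜 : Type*} [NontriviallyNormedField 𝕜] (p : MvPolynomial ι 𝕜) (x : ι → 𝕜) :
    HasFDerivAt (fun y => eval y p)
      (∑ j, eval x (pderiv j p) • ContinuousLinearMap.proj (R := 𝕜) (φ := fun _ : ι => 𝕜) j) x := by
  classical
  induction p using MvPolynomial.induction_on with
  | C a =>
    simp only [eval_C]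
    refine (hasFDerivAt_const a x).congr_fderiv ?_
    ext v
    simp
  | add p q hp hq =>
    simp only [map_add]
    refine (hp.add hq).congr_fderiv ?_
    ext v
    simp [add_mul, Finset.sum_add_distrib]
  | mul_X p i hp =>
    simp only [map_mul, eval_X]
    refine (hp.mul (hasFDerivAt_apply i x)).congr_fderiv ?_
    ext v
    simp [pderiv_X, Pi.single_apply, apply_ite, Finset.sum_add_distrib, Finset.mul_sum, mul_add,
      mul_left_comm, mul_comm]

lemma isGraphNear_of_jacobian_det_ne_zero [DecidableEq ι] {P : Type*} [NormedAddCommGroup P]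
    [NormedSpace ℂ P] [CompleteSpace P] {f : P → ι → MvPolynomial ι ℂ} {t : P} {x : ι → ℂ}
    (hf : ContDiffAt ℂ 1 (fun q : P × (ι → ℂ) => fun i => eval q.2 (f q.1 i)) (t, x))
    (hx : ∀ i, eval x (f t i) = 0)
    (hdet : (Matrix.of fun i j => eval x (pderiv j (f t i))).det ≠ 0) :
    IsGraphNear {q : P × (ι → ℂ) | ∀ i, eval q.2 (f q.1 i) = 0} (t, x) := by
  let J := Matrix.of fun i j => eval x (pderiv j (f t i))
  let J' := (J.toLinearEquiv' (J.invertibleOfIsUnitDet hdet.isUnit)).toContinuousLinearEquiv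
  have hasFDerivAt : HasFDerivAt (fun y i => eval y (f t i)) (J' : (ι → ℂ) →L[ℂ] ι → ℂ) x :=
    hasFDerivAt_pi'.2 fun i => (hasFDerivAt_eval (f t i) x).congr_fderiv <| by
      ext v
      change _ = J.mulVec v i
      simp [J, Matrix.mulVec, dotProduct]
  have := isGraphNear_of_hasFDerivAt_isInvertible hf (funext hx) hasFDerivAt ⟨J', rfl⟩
  simpa only [_root_.funext_iff] using! this

end PolynomialSystems

section Properness

open Filter Topology

variable {𝕜 T E : Type*} [RCLike 𝕜] [TopologicalSpace T] [NormedAddCommGroup E] [NormedSpace 𝕜 E]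
  [ProperSpace E] {S : Set (T × E)} {t₀ : T}

-- Fibrewise, the section `ℓ = 1` is an affine chart of the projectivisation of the cone.
lemma exists_eventually_forall_norm_le_of_apply_eq_one (hS : IsClosed S)
    (hS_smul : ∀ (c : 𝕜) {t x}, (t, x) ∈ S → (t, c • x) ∈ S) (ℓ : E →L[𝕜] 𝕜)
    (hℓ : ∀ x, (t₀, x) ∈ S → ℓ x = 0 → x = 0) :
    ∃ R, ∀ᶠ t in 𝓝 t₀, ∀ x, (t, x) ∈ S → ℓ x = 1 → ‖x‖ ≤ R := by
  have : ∀ᶠ q in 𝓝 (t₀, (0 : ℝ)), ∀ y ∈ Metric.sphere (0 : E) 1,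
      (q.1, y) ∈ S → q.2 < ‖ℓ y‖ := by
    refine (isCompact_sphere 0 1).eventually_forall_of_forall_eventually fun y hy => ?_
    by_cases hyS : (t₀, y) ∈ S
    · have pos : 0 < ‖ℓ y‖ := norm_pos_iff.2 fun h =>
        ne_zero_of_mem_unit_sphere ⟨y, hy⟩ (hℓ y hyS h)
      have lt : ∀ᶠ q : (T × ℝ) × E in 𝓝 ((t₀, 0), y), q.1.2 < ‖ℓ q.2‖ :=
        continuousAt_fst.snd.eventually_lt (by fun_prop) pos
      exact lt.mono fun q hq _ => hq
    · have notMem : ∀ᶠ q : (T × ℝ) × E in 𝓝 ((t₀, 0), y), (q.1.1, q.2) ∈ Sᶜ :=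
        (hS.isOpen_compl.preimage (by fun_prop)).mem_nhds hyS
      exact notMem.mono fun q hq hqS => absurd hqS hq
  rw [nhds_prod_eq] at this
  obtain ⟨A, hA, B, hB, hAB⟩ := eventually_prod_iff.1 this
  obtain ⟨δ, δ_pos, hδ⟩ := hB.exists_gt
  refine ⟨δ⁻¹, hA.mono fun t ht x hx hx1 => ?_⟩
  have x_ne : x ≠ 0 := by
    rintro rfl
    simp at hx1
  have := hAB ht hδ ((‖x‖ : 𝕜)⁻¹ • x) (by simp [norm_smul_inv_norm x_ne]) (hS_smul _ hx)
  rw [map_smul, hx1, smul_eq_mul, mul_one, norm_inv, norm_algebraMap', norm_norm] at this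
  exact (le_inv_comm₀ δ_pos (norm_pos_iff.2 x_ne)).1 this.le

end Properness

section HomogeneousPolynomials

variable {σ R : Type*} [CommSemiring R] {p : MvPolynomial σ R} {n : ℕ}

lemma eval_smul_of_isHomogeneous (hp : p.IsHomogeneous n) (c : R) (x : σ → R) :
    eval (c • x) p = c ^ n * eval x p := by
  rw [eval_eq, eval_eq, Finset.mul_sum]
  refine Finset.sum_congr rfl fun d hd => ?_
  simp only [Pi.smul_apply, smul_eq_mul, mul_pow, Finset.prod_mul_distrib,
    Finset.prod_pow_eq_pow_sum, ← hp.degree_eq_sum_deg_support hd]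
  ring

lemma isWeightedHomogeneous_aeval_of_isHomogeneous {τ D : Type*} [AddCommMonoid D] {w : τ → D}
    {d : D} {g : σ → MvPolynomial τ R} (hp : p.IsHomogeneous n)
    (hg : ∀ i, IsWeightedHomogeneous w (g i) d) : IsWeightedHomogeneous w (aeval g p) (n • d) := by
  rw [p.as_sum, map_sum]
  refine .sum _ _ _ fun γ hγ => ?_
  rw [aeval_monomial, algebraMap_eq, hp.degree_eq_sum_deg_support hγ, Finset.sum_smul]
  exact .C_mul (.prod _ _ _ fun i _ => (hg i).pow _) _

end HomogeneousPolynomials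

section ProjectiveSpace

variable {K E : Type*} [Field K] [AddCommGroup E] [Module K E] {C : Set E} {ℓ : E →ₗ[K] K}

lemma bijOn_inv_smul_rep (hC : ∀ c : K, ∀ x ∈ C, c • x ∈ C) (hℓ : ∀ x ∈ C, ℓ x = 0 → x = 0) :
    Set.BijOn (fun p : Projectivization K E => (ℓ p.rep)⁻¹ • p.rep) {p | p.rep ∈ C}
      {x ∈ C | ℓ x = 1} := by
  have ℓ_ne_zero {p : Projectivization K E} (hp : p.rep ∈ C) : ℓ p.rep ≠ 0 :=
    fun h => p.rep_nonzero (hℓ _ hp h)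
  refine ⟨fun p hp => ⟨hC _ _ hp, by simp [ℓ_ne_zero hp]⟩, fun p hp q _ hpq => ?_, ?_⟩
  · rw [← p.mk_rep, ← q.mk_rep, Projectivization.mk_eq_mk_iff']
    refine ⟨ℓ p.rep * (ℓ q.rep)⁻¹, ?_⟩
    rw [mul_smul, ← show (ℓ p.rep)⁻¹ • p.rep = (ℓ q.rep)⁻¹ • q.rep from hpq,
      smul_inv_smul₀ (ℓ_ne_zero hp)]
  · rintro x ⟨hxC, hx⟩
    obtain ⟨c, hc⟩ := Projectivization.exists_smul_eq_mk_rep K x fun h => by simp [h] at hx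
    refine ⟨.mk K x fun h => by simp [h] at hx, ?_, ?_⟩
    · rw [Set.mem_ofPred_eq, ← hc]
      exact hC c x hxC
    · simp [← hc, Units.smul_def, hx]

end ProjectiveSpace

section Coordinates

variable {r : ℕ} {R : Type*}

/-- The splitting of the `2r + 2` homogeneous coordinates into the block `x₀, …, x_r` and the block
`x_{r+1}, …, x_{2r+1}`. -/
def coordEquiv (r : ℕ) : Fin (r + 1) ⊕ Fin (r + 1) ≃ Fin (2 * r + 2) :=
  finSumFinEquiv.trans (finCongr (by omega))

/-- The position of the coordinate `x_j` of the first block. -/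
def xIdx (j : Fin (r + 1)) : Fin (2 * r + 2) := coordEquiv r (.inl j)

/-- The position of the coordinate `y_j := x_{r+1+j}` of the second block. -/
def yIdx (j : Fin (r + 1)) : Fin (2 * r + 2) := coordEquiv r (.inr j)

/-- The vector with blocks of coordinates `x` and `y`. -/
def joinCoords (x y : Fin (r + 1) → R) : Fin (2 * r + 2) → R :=
  Sum.elim x y ∘ (coordEquiv r).symm

@[simp]
lemma joinCoords_xIdx (x y : Fin (r + 1) → R) (j : Fin (r + 1)) :
    joinCoords x y (xIdx j) = x j := by
  simp [joinCoords, xIdx]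

@[simp]
lemma joinCoords_yIdx (x y : Fin (r + 1) → R) (j : Fin (r + 1)) :
    joinCoords x y (yIdx j) = y j := by
  simp [joinCoords, yIdx]

@[simp]
lemma xIdx_inj {j k : Fin (r + 1)} : xIdx j = xIdx k ↔ j = k := by simp [xIdx]

@[simp]
lemma yIdx_inj {j k : Fin (r + 1)} : yIdx j = yIdx k ↔ j = k := by simp [yIdx]

@[simp]
lemma xIdx_ne_yIdx (j k : Fin (r + 1)) : xIdx j ≠ yIdx k := by simp [xIdx, yIdx]

@[simp]
lemma yIdx_ne_xIdx (j k : Fin (r + 1)) : yIdx j ≠ xIdx k := by simp [xIdx, yIdx]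

lemma forall_coord {P : Fin (2 * r + 2) → Prop} :
    (∀ j, P j) ↔ (∀ j, P (xIdx j)) ∧ ∀ j, P (yIdx j) := by
  rw [← (coordEquiv r).forall_congr_right, Sum.forall]
  rfl

lemma sum_coord [AddCommMonoid R] (f : Fin (2 * r + 2) → R) :
    ∑ j, f j = ∑ j, f (xIdx j) + ∑ j, f (yIdx j) := by
  rw [← (coordEquiv r).sum_comp, Fintype.sum_sum_type]
  rfl

lemma joinCoords_comp (z : Fin (2 * r + 2) → R) : joinCoords (z ∘ xIdx) (z ∘ yIdx) = z :=
  _root_.funext_iff.2 (forall_coord.2 (by simp))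

lemma val_xIdx (j : Fin (r + 1)) : (xIdx j : ℕ) = j := by
  simp [xIdx, coordEquiv]

lemma val_yIdx (j : Fin (r + 1)) : (yIdx j : ℕ) = r + 1 + j := by
  simp [yIdx, coordEquiv, add_comm]

lemma forall_le_val_iff_forall_yIdx {P : Fin (2 * r + 2) → Prop} :
    (∀ j : Fin (2 * r + 2), r + 1 ≤ (j : ℕ) → P j) ↔ ∀ j, P (yIdx j) := by
  simp only [forall_coord, val_xIdx, val_yIdx, Nat.le_add_right, forall_const]
  exact and_iff_right fun j hj => absurd j.isLt (not_lt.2 hj)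

lemma cubicForm_eq (Q : Fin r → MvPolynomial (Fin (2 * r + 2)) ℂ) :
    cubicForm r Q = X (yIdx 0) ^ 2 * X (xIdx 0) + ∑ i : Fin r, X (yIdx i.succ) * Q i := by
  have index_eq (i : Fin r) : (⟨r + 2 + i, by lia⟩ : Fin (2 * r + 2)) = yIdx i.succ := by
    rw [Fin.ext_iff, val_yIdx, Fin.val_succ]
    lia
  simp only [cubicForm, index_eq]
  rfl

end Coordinates

section BlowupEquations

variable {r : ℕ} {R : Type*} [CommRing R] [Algebra ℂ R]

/-- The partial derivative along `x_j`, at the point `p`, of the combination `∑ c_k Q_k`. -/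
def partialComb (Q : Fin r → MvPolynomial (Fin (2 * r + 2)) ℂ) (c : Fin r → R)
    (p : Fin (2 * r + 2) → R) (j : Fin (2 * r + 2)) : R :=
  ∑ k, c k * aeval p (pderiv j (Q k))

/-- The left-hand sides of the equations obtained from the partial derivatives of `cubicForm r Q` by
the substitution `y = s η`, after dividing those along `x₀, …, x_r, y₀` by `s`. The point `x` lies
on the linear space `y = 0` blown up and `η` is a normal direction, so `s = 1` gives back the
partial derivatives, and `s = 0` restricts to the exceptional divisor. -/
def blowupEq (Q : Fin r → MvPolynomial (Fin (2 * r + 2)) ℂ) (x : Fin (r + 1) → R) (s : R)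
    (η : Fin (r + 1) → R) : Fin (r + 1) ⊕ Fin (r + 1) → R :=
  let G := partialComb Q (Fin.tail η) (joinCoords x (s • η))
  Sum.elim (fun j => (if j = 0 then s * η 0 ^ 2 else 0) + G (xIdx j))
    (Fin.cons (2 * η 0 * x 0 + G (yIdx 0))
      fun i => aeval (joinCoords x (s • η)) (Q i) + s * G (yIdx i.succ))

lemma eval_pderiv_cubicForm (Q : Fin r → MvPolynomial (Fin (2 * r + 2)) ℂ)
    (x y : Fin (r + 1) → ℂ) (c : Fin (r + 1) ⊕ Fin (r + 1)) :
    eval (joinCoords x y) (pderiv (coordEquiv r c) (cubicForm r Q)) = blowupEq Q x 1 y c := by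
  classical
  rw [cubicForm_eq]
  rcases c with j | j
  · change eval _ (pderiv (xIdx j) _) = _
    simp [blowupEq, partialComb, pderiv_X, Pi.single_apply, Derivation.leibniz, Fin.tail,
      aeval_eq_eval, apply_ite, eq_comm (a := (0 : Fin (r + 1)))]
  · change eval _ (pderiv (yIdx j) _) = _
    cases j using Fin.cases with
    | zero =>
      simp [blowupEq, partialComb, pderiv_X, Derivation.leibniz, Fin.tail, aeval_eq_eval,
        mul_comm, mul_left_comm]
    | succ i =>
      simp [blowupEq, partialComb, pderiv_X, Pi.single_apply, Derivation.leibniz, Fin.tail,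
        aeval_eq_eval, Finset.sum_add_distrib, eq_comm (a := (0 : Fin (r + 1))), add_comm]

lemma map_blowupEq {S : Type*} [CommRing S] [Algebra ℂ S] (φ : R →ₐ[ℂ] S)
    (Q : Fin r → MvPolynomial (Fin (2 * r + 2)) ℂ) (x : Fin (r + 1) → R) (s : R)
    (η : Fin (r + 1) → R) (c : Fin (r + 1) ⊕ Fin (r + 1)) :
    φ (blowupEq Q x s η c) = blowupEq Q (φ ∘ x) (φ s) (φ ∘ η) c := by
  have map_joinCoords : (fun j => φ (joinCoords x (s • η) j)) =
      joinCoords (φ ∘ x) (φ s • (φ ∘ η)) :=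
    _root_.funext_iff.2 (forall_coord.2 (by simp))
  rcases c with j | j
  · simp [blowupEq, partialComb, Fin.tail, comp_aeval_apply, map_joinCoords, apply_ite φ]
  · cases j using Fin.cases <;>
      simp [blowupEq, partialComb, Fin.tail, comp_aeval_apply, map_joinCoords, map_ofNat]

end BlowupEquations

section Nondegeneracy

variable {r : ℕ} {Q : Fin r → MvPolynomial (Fin (2 * r + 2)) ℂ}

/-- `Q` is nondegenerate if the equations `blowupEq Q` have only irrelevant zeros, that is, define
the empty subset of the blowup. Regarding `s` as a coordinate of degree `0` next to the `x_j`, they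
are bihomogeneous for a `bundleWeight`. -/
def Nondegenerate (Q : Fin r → MvPolynomial (Fin (2 * r + 2)) ℂ) : Prop :=
  ∀ (x : Fin (r + 1) → ℂ) (s : ℂ) (η : Fin (r + 1) → ℂ),
    blowupEq Q x s η = 0 → (x = 0 ∧ s = 0) ∨ η = 0

/-- The polynomial ring in the variables `x_j`, `s`, `η_j` of `blowupEq`, in this order called
`Sum.inl (some j)`, `Sum.inl none`, `Sum.inr j`. -/
abbrev BlowupRing (r : ℕ) : Type := MvPolynomial (Option (Fin (r + 1)) ⊕ Fin (r + 1)) ℂ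

/-- The equations `blowupEq Q` in indeterminates. -/
def blowupPoly (Q : Fin r → MvPolynomial (Fin (2 * r + 2)) ℂ) :
    Fin (r + 1) ⊕ Fin (r + 1) → BlowupRing r :=
  blowupEq Q (fun j => X (Sum.inl (some j))) (X (Sum.inl none)) fun j => X (Sum.inr j)

lemma nondegenerate_iff_forall_blowupPoly :
    Nondegenerate Q ↔ ∀ z, (∀ c, eval z (blowupPoly Q c) = 0) → z ∘ .inl = 0 ∨ z ∘ .inr = 0 := by
  have eval_blowupPoly (z) : (∀ c, eval z (blowupPoly Q c) = 0) ↔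
      blowupEq Q (fun j => z (.inl (some j))) (z (.inl none)) (z ∘ .inr) = 0 := by
    simp only [blowupPoly, ← aeval_eq_eval, map_blowupEq, _root_.funext_iff]
    simp [Function.comp_def]
  simp only [eval_blowupPoly]
  constructor
  · intro h z hz
    refine (h _ _ _ hz).imp_left fun hxs => ?_
    exact _root_.funext (Option.forall.2 ⟨hxs.2, congrFun hxs.1⟩)
  · intro h x s η hz
    refine (h (Sum.elim (fun o => Option.elim o s x) η) hz).imp_left fun hxs => ?_
    exact ⟨_root_.funext fun j => congrFun hxs (some j), congrFun hxs none⟩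

lemma isWeightedHomogeneous_blowupPoly (hQ : ∀ i, (Q i).IsHomogeneous 2)
    (c : Fin (r + 1) ⊕ Fin (r + 1)) :
    IsWeightedHomogeneous (bundleWeight fun o : Option (Fin (r + 1)) => o.elim 0 fun _ => 1)
      (blowupPoly Q c) (Sum.elim (fun _ => (1, 2)) (Fin.cons (1, 2) fun _ => (2, 2)) c) := by
  set w := bundleWeight (β := Fin (r + 1)) fun o : Option (Fin (r + 1)) => o.elim 0 fun _ => 1
  set p : Fin (2 * r + 2) → BlowupRing r :=
    joinCoords (fun j => X (Sum.inl (some j)))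
      ((X (Sum.inl none) : BlowupRing r) • fun j => X (Sum.inr j))
  have hom_x (j) : IsWeightedHomogeneous w (X (Sum.inl (some j)) : BlowupRing r) (1, 1) :=
    isWeightedHomogeneous_X ..
  have hom_s : IsWeightedHomogeneous w (X (Sum.inl none) : BlowupRing r) (1, 0) :=
    isWeightedHomogeneous_X ..
  have hom_η (j) : IsWeightedHomogeneous w (X (Sum.inr j) : BlowupRing r) (0, 1) :=
    isWeightedHomogeneous_X ..
  have hom_p : ∀ j, IsWeightedHomogeneous w (p j) (1, 1) :=
    forall_coord.2 ⟨by simpa [p] using hom_x, fun j => by simpa [p] using hom_s.mul (hom_η j)⟩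
  have hom_G (j) : IsWeightedHomogeneous w
      (partialComb Q (Fin.tail fun j => (X (Sum.inr j) : BlowupRing r)) p j) (1, 2) :=
    .sum _ _ _ fun k _ =>
      (hom_η k.succ).mul (isWeightedHomogeneous_aeval_of_isHomogeneous (hQ k).pderiv hom_p)
  rcases c with j | j
  · refine .add ?_ (hom_G _)
    split_ifs
    exacts [hom_s.mul ((hom_η 0).pow 2), isWeightedHomogeneous_zero ..]
  · cases j using Fin.cases with
    | zero =>
      exact .add (((isWeightedHomogeneous_C w (2 : ℂ)).mul (hom_η 0)).mul (hom_x 0)) (hom_G _)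
    | succ i =>
      exact (isWeightedHomogeneous_aeval_of_isHomogeneous (hQ i) hom_p).add (hom_s.mul (hom_G _))

lemma isLinearMap_aeval {R : Type*} [CommRing R] [Algebra ℂ R] (p : Fin (2 * r + 2) → R)
    (i : Fin r) : IsLinearMap ℂ fun Q : Fin r → homogeneousSubmodule (Fin (2 * r + 2)) ℂ 2 =>
      aeval p (Q i : MvPolynomial (Fin (2 * r + 2)) ℂ) where
  map_add := by simp
  map_smul := by simp

lemma isLinearMap_partialComb {R : Type*} [CommRing R] [Algebra ℂ R] (c : Fin r → R)
    (p : Fin (2 * r + 2) → R) (j : Fin (2 * r + 2)) :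
    IsLinearMap ℂ fun Q : Fin r → homogeneousSubmodule (Fin (2 * r + 2)) ℂ 2 =>
      partialComb (fun i => (Q i : MvPolynomial (Fin (2 * r + 2)) ℂ)) c p j where
  map_add := by simp [partialComb, mul_add, Finset.sum_add_distrib]
  map_smul := by simp [partialComb, Finset.smul_sum]

lemma isPolynomialFun_coeff_blowupPoly (c : Fin (r + 1) ⊕ Fin (r + 1))
    (γ : Option (Fin (r + 1)) ⊕ Fin (r + 1) →₀ ℕ) :
    IsPolynomialFun fun Q : Fin r → homogeneousSubmodule (Fin (2 * r + 2)) ℂ 2 =>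
      coeff γ (blowupPoly (fun i => (Q i : MvPolynomial (Fin (2 * r + 2)) ℂ)) c) := by
  have of_isLinearMap {g : (Fin r → homogeneousSubmodule (Fin (2 * r + 2)) ℂ 2) → BlowupRing r}
      (hg : IsLinearMap ℂ g) : IsPolynomialFun fun Q => coeff γ (g Q) :=
    .of_isLinearMap ((lcoeff ℂ γ) ∘ₗ hg.mk' g).isLinear
  rcases c with j | j
  · exact .add (.const _) (of_isLinearMap (isLinearMap_partialComb ..))
  · cases j using Fin.cases with
    | zero => exact .add (.const _) (of_isLinearMap (isLinearMap_partialComb ..))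
    | succ i =>
      refine .add (of_isLinearMap (isLinearMap_aeval _ i)) (of_isLinearMap ?_)
      exact (LinearMap.mulLeft ℂ (X (Sum.inl none) : BlowupRing r) ∘ₗ
        (isLinearMap_partialComb (r := r) _ _ _).mk' _).isLinear

theorem isZariskiOpen_setOf_nondegenerate :
    IsZariskiOpen {Q : Fin r → homogeneousSubmodule (Fin (2 * r + 2)) ℂ 2 |
      Nondegenerate fun i => (Q i : MvPolynomial (Fin (2 * r + 2)) ℂ)} := by
  simp only [nondegenerate_iff_forall_blowupPoly]
  exact isZariskiOpen_setOf_forall_common_zero_irrelevant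
    (fun Q => isWeightedHomogeneous_blowupPoly fun i => (Q i).2) isPolynomialFun_coeff_blowupPoly

end Nondegeneracy

section BaseLocus

variable {r : ℕ} {Q : Fin r → MvPolynomial (Fin (2 * r + 2)) ℂ}

/-- The affine cone over the locus `x_{r+1} = … = x_{2r+1} = Q₁ = … = Q_r = 0`. -/
def baseLocus (Q : Fin r → MvPolynomial (Fin (2 * r + 2)) ℂ) : Set (Fin (2 * r + 2) → ℂ) :=
  {z | (∀ j : Fin (2 * r + 2), r + 1 ≤ (j : ℕ) → z j = 0) ∧ ∀ i, eval z (Q i) = 0}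

lemma mem_baseLocus_iff {z : Fin (2 * r + 2) → ℂ} :
    z ∈ baseLocus Q ↔ (∀ j, z (yIdx j) = 0) ∧ ∀ i, eval z (Q i) = 0 :=
  and_congr_left fun _ => forall_le_val_iff_forall_yIdx

lemma joinCoords_zero_of_mem_baseLocus {z : Fin (2 * r + 2) → ℂ} (hz : z ∈ baseLocus Q) :
    joinCoords (z ∘ xIdx) 0 = z := by
  conv_rhs => rw [← joinCoords_comp z,
    show z ∘ yIdx = 0 from _root_.funext (mem_baseLocus_iff.1 hz).1]

lemma smul_mem_baseLocus (hQ : ∀ i, (Q i).IsHomogeneous 2) (c : ℂ) {z : Fin (2 * r + 2) → ℂ}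
    (hz : z ∈ baseLocus Q) : c • z ∈ baseLocus Q := by
  refine ⟨fun j hj => ?_, fun i => ?_⟩
  · simp [hz.1 j hj]
  · rw [eval_smul_of_isHomogeneous (hQ i), hz.2, mul_zero]

lemma eval_pderiv_cubicForm_eq_zero_of_mem_baseLocus {z : Fin (2 * r + 2) → ℂ}
    (hz : z ∈ baseLocus Q) (j : Fin (2 * r + 2)) : eval z (pderiv j (cubicForm r Q)) = 0 := by
  rw [← joinCoords_zero_of_mem_baseLocus hz, ← (coordEquiv r).apply_symm_apply j,
    eval_pderiv_cubicForm]
  rcases (coordEquiv r).symm j with j | j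
  · simp [blowupEq, partialComb, Fin.tail]
  · cases j using Fin.cases <;>
      simp [blowupEq, partialComb, Fin.tail, aeval_eq_eval, joinCoords_zero_of_mem_baseLocus hz,
        hz.2]

lemma partialComb_euler (hQ : ∀ i, (Q i).IsHomogeneous 2) (c : Fin r → ℂ)
    (p : Fin (2 * r + 2) → ℂ) :
    ∑ j, p j * partialComb Q c p j = 2 * ∑ k, c k * eval p (Q k) := by
  have euler (k : Fin r) : ∑ j, p j * eval p (pderiv j (Q k)) = 2 * eval p (Q k) := by
    simpa using congrArg (eval p) (hQ k).sum_X_mul_pderiv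
  simp only [partialComb, aeval_eq_eval, Finset.mul_sum, mul_left_comm (2 : ℂ), ← euler]
  rw [Finset.sum_comm]
  exact Finset.sum_congr rfl fun k _ => Finset.sum_congr rfl fun j _ => mul_left_comm ..

namespace Nondegenerate

variable (hQ : Nondegenerate Q) {z : Fin (2 * r + 2) → ℂ}

include hQ

lemma mem_baseLocus (hz : ∀ j, eval z (pderiv j (cubicForm r Q)) = 0) : z ∈ baseLocus Q := by
  have blowupEq_eq_zero : blowupEq Q (z ∘ xIdx) 1 (z ∘ yIdx) = 0 := by
    ext c
    rw [← eval_pderiv_cubicForm, joinCoords_comp, hz, Pi.zero_apply]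
  have y_eq_zero : z ∘ yIdx = 0 :=
    (hQ _ _ _ blowupEq_eq_zero).resolve_left fun h => one_ne_zero h.2
  refine mem_baseLocus_iff.2 ⟨congrFun y_eq_zero, fun i => ?_⟩
  have := congrFun blowupEq_eq_zero (.inr i.succ)
  rw [y_eq_zero] at this
  simpa [blowupEq, partialComb, Fin.tail, aeval_eq_eval, ← y_eq_zero, joinCoords_comp] using this

lemma eq_zero_of_mem_baseLocus_of_apply_xIdx_zero (hz : z ∈ baseLocus Q) (h₀ : z (xIdx 0) = 0) :
    z = 0 := by
  have blowupEq_eq_zero : blowupEq Q (z ∘ xIdx) 0 (Fin.cons 1 0) = 0 := by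
    ext (j | j)
    · simp [blowupEq, partialComb]
    · cases j using Fin.cases <;>
        simp [blowupEq, partialComb, h₀, joinCoords_zero_of_mem_baseLocus hz, hz.2, aeval_eq_eval]
  have x_eq_zero : z ∘ xIdx = 0 :=
    ((hQ _ _ _ blowupEq_eq_zero).resolve_right fun h => one_ne_zero (congrFun h 0)).1
  rw [← joinCoords_zero_of_mem_baseLocus hz, x_eq_zero]
  exact _root_.funext (forall_coord.2 (by simp))

-- A relation among the differentials of the `Q_k` along `y = 0` extends to a point of the
-- exceptional divisor `s = 0`, the remaining coordinate `η₀` being determined by the equation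
-- along `y₀`.
lemma eq_zero_of_forall_partialComb_eq_zero (hz : z ∈ baseLocus Q) (h₀ : z (xIdx 0) ≠ 0)
    {c : Fin r → ℂ} (hc : ∀ j, partialComb Q c z (xIdx j) = 0) : c = 0 := by
  let η₀ := -partialComb Q c z (yIdx 0) / (2 * z (xIdx 0))
  have blowupEq_eq_zero : blowupEq Q (z ∘ xIdx) 0 (Fin.cons η₀ c) = 0 := by
    ext (j | j)
    · simp [blowupEq, joinCoords_zero_of_mem_baseLocus hz, hc]
    · cases j using Fin.cases with
      | zero =>
        simp only [blowupEq, joinCoords_zero_of_mem_baseLocus hz, zero_smul, Fin.tail_cons,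
          Sum.elim_inr, Fin.cons_zero, η₀, Function.comp_apply, Pi.zero_apply]
        field_simp
        ring
      | succ i => simp [blowupEq, joinCoords_zero_of_mem_baseLocus hz, hz.2, aeval_eq_eval]
  have η_eq_zero := (hQ _ _ _ blowupEq_eq_zero).resolve_left fun h => h₀ (congrFun h.1 0)
  exact _root_.funext fun k => by simpa using congrFun η_eq_zero k.succ

end Nondegenerate

/-- The square polynomial system whose zeros are the points of `baseLocus Q` on the affine chart
`x₀ = 1`. -/
def chartSystem (Q : Fin r → MvPolynomial (Fin (2 * r + 2)) ℂ) :
    Fin (2 * r + 2) → MvPolynomial (Fin (2 * r + 2)) ℂ :=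
  joinCoords (Fin.cons (X (xIdx 0) - 1) Q) fun j => X (yIdx j)

lemma forall_eval_chartSystem_eq_zero_iff {z : Fin (2 * r + 2) → ℂ} :
    (∀ i, eval z (chartSystem Q i) = 0) ↔ z ∈ baseLocus Q ∧ z (xIdx 0) = 1 := by
  rw [forall_coord, mem_baseLocus_iff]
  simp only [chartSystem, joinCoords_xIdx, Fin.forall_fin_succ, Fin.cons_zero, map_sub, eval_X,
    map_one, sub_eq_zero, Fin.cons_succ, joinCoords_yIdx]
  tauto

lemma vecMul_jacobian_chartSystem (v z : Fin (2 * r + 2) → ℂ) (j : Fin (2 * r + 2)) :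
    (Matrix.of fun i j => eval z (pderiv j (chartSystem Q i))).vecMul v j =
      (if j = xIdx 0 then v (xIdx 0) else 0) + partialComb Q (fun k => v (xIdx k.succ)) z j +
        ∑ k, if j = yIdx k then v (yIdx k) else 0 := by
  classical
  simp [Matrix.vecMul, dotProduct, sum_coord, Fin.sum_univ_succ, chartSystem, partialComb,
    aeval_eq_eval, pderiv_X, Pi.single_apply, apply_ite, eq_comm]

lemma det_jacobian_chartSystem_ne_zero (hQ : Nondegenerate Q) (hom : ∀ i, (Q i).IsHomogeneous 2)
    {z : Fin (2 * r + 2) → ℂ} (hz : ∀ i, eval z (chartSystem Q i) = 0) :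
    (Matrix.of fun i j => eval z (pderiv j (chartSystem Q i))).det ≠ 0 := by
  obtain ⟨hz, h₀⟩ := forall_eval_chartSystem_eq_zero_iff.1 hz
  intro hdet
  obtain ⟨v, hv, hvz⟩ := Matrix.exists_vecMul_eq_zero_iff.2 hdet
  simp only [_root_.funext_iff, vecMul_jacobian_chartSystem, Pi.zero_apply, forall_coord, xIdx_inj,
    yIdx_inj, xIdx_ne_yIdx, yIdx_ne_xIdx, if_false, zero_add, Finset.sum_const_zero, add_zero,
    Finset.sum_ite_eq, Finset.mem_univ, if_true] at hvz
  obtain ⟨hx, hy⟩ := hvz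
  set c : Fin r → ℂ := fun k => v (xIdx k.succ)
  have partialComb_succ (j : Fin r) : partialComb Q c z (xIdx j.succ) = 0 := by
    simpa using hx j.succ
  have partialComb_zero : partialComb Q c z (xIdx 0) = 0 := by
    have := partialComb_euler hom c z
    simpa [sum_coord, Fin.sum_univ_succ, partialComb_succ, (mem_baseLocus_iff.1 hz).1, h₀, hz.2]
      using this
  have c_eq_zero : c = 0 := hQ.eq_zero_of_forall_partialComb_eq_zero hz (h₀ ▸ one_ne_zero)
    (Fin.cases partialComb_zero partialComb_succ)
  have v_xIdx_zero : v (xIdx 0) = 0 := by simpa [partialComb_zero] using hx 0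
  have v_yIdx (j) : v (yIdx j) = 0 := by simpa [partialComb, c_eq_zero] using hy j
  exact hv (_root_.funext (forall_coord.2 ⟨Fin.cases v_xIdx_zero (congrFun c_eq_zero), v_yIdx⟩))

end BaseLocus

section CountingOnTheChart

open Filter Topology

variable {r : ℕ}

/-- The points of `baseLocus Q` normalized by `x₀ = 1`. -/
def chartPoints (Q : Fin r → MvPolynomial (Fin (2 * r + 2)) ℂ) : Set (Fin (2 * r + 2) → ℂ) :=
  {z ∈ baseLocus Q | z (xIdx 0) = 1}

variable (A B : Fin r → homogeneousSubmodule (Fin (2 * r + 2)) ℂ 2)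

/-- The family of tuples of quadrics on the line through `A` (at `t = 0`) and `B` (at `t = 1`). -/
def lineFamily (t : ℂ) (i : Fin r) : MvPolynomial (Fin (2 * r + 2)) ℂ :=
  (AffineMap.lineMap A B t : Fin r → homogeneousSubmodule (Fin (2 * r + 2)) ℂ 2) i

/-- The pairs of a parameter `t` and a point of `chartPoints (lineFamily A B t)`. -/
def chartIncidence : Set (ℂ × (Fin (2 * r + 2) → ℂ)) :=
  {q | q.2 ∈ chartPoints (lineFamily A B q.1)}

lemma contDiff_eval_lineFamily (i : Fin r) :
    ContDiff ℂ 1 fun q : ℂ × (Fin (2 * r + 2) → ℂ) => eval q.2 (lineFamily A B q.1 i) := by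
  have contDiff_eval (p : MvPolynomial (Fin (2 * r + 2)) ℂ) :
      ContDiff ℂ 1 fun z : Fin (2 * r + 2) → ℂ => eval z p := by
    simpa [aeval_eq_eval] using (AnalyticOnNhd.eval_mvPolynomial p).contDiff
  simp only [lineFamily, AffineMap.lineMap_apply_module, Pi.add_apply, Pi.smul_apply,
    Submodule.coe_add, Submodule.coe_smul, map_add, smul_eval]
  exact ((contDiff_const.sub contDiff_fst).mul ((contDiff_eval _).comp contDiff_snd)).add
    (contDiff_fst.mul ((contDiff_eval _).comp contDiff_snd))

lemma contDiff_eval_chartSystem_lineFamily :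
    ContDiff ℂ 1 fun q : ℂ × (Fin (2 * r + 2) → ℂ) =>
      fun i => eval q.2 (chartSystem (lineFamily A B q.1) i) := by
  refine contDiff_pi.2 (forall_coord.2 ⟨fun j => ?_, fun j => ?_⟩)
  · cases j using Fin.cases with
    | zero =>
      simp only [chartSystem, joinCoords_xIdx, Fin.cons_zero, map_sub, eval_X, map_one]
      fun_prop
    | succ i =>
      simpa only [chartSystem, joinCoords_xIdx, Fin.cons_succ] using contDiff_eval_lineFamily A B i
  · simp only [chartSystem, joinCoords_yIdx, eval_X]
    fun_prop

lemma chartIncidence_eq :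
    chartIncidence A B = {q | ∀ i, eval q.2 (chartSystem (lineFamily A B q.1) i) = 0} :=
  Set.ext fun _ => forall_eval_chartSystem_eq_zero_iff.symm

lemma isClosed_chartIncidence : IsClosed (chartIncidence A B) := by
  rw [chartIncidence_eq, Set.ofPred_forall]
  exact isClosed_iInter fun i => isClosed_eq
    ((continuous_apply i).comp (contDiff_eval_chartSystem_lineFamily A B).continuous)
    continuous_const

lemma isClosed_setOf_mem_baseLocus_lineFamily :
    IsClosed {q : ℂ × (Fin (2 * r + 2) → ℂ) | q.2 ∈ baseLocus (lineFamily A B q.1)} := by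
  simp only [mem_baseLocus_iff, Set.ofPred_and, Set.ofPred_forall]
  exact (isClosed_iInter fun j => isClosed_eq (by fun_prop) continuous_const).inter
    (isClosed_iInter fun i =>
      isClosed_eq (contDiff_eval_lineFamily A B i).continuous continuous_const)

variable {A B} {t : ℂ}

lemma isHomogeneous_lineFamily (i : Fin r) : (lineFamily A B t i).IsHomogeneous 2 :=
  SetLike.coe_mem (AffineMap.lineMap A B t i)

lemma isGraphNear_chartIncidence (h : Nondegenerate (lineFamily A B t))
    {z : Fin (2 * r + 2) → ℂ} (hz : (t, z) ∈ chartIncidence A B) :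
    IsGraphNear (chartIncidence A B) (t, z) := by
  rw [chartIncidence_eq] at hz ⊢
  exact isGraphNear_of_jacobian_det_ne_zero (f := fun s => chartSystem (lineFamily A B s))
    (contDiff_eval_chartSystem_lineFamily A B).contDiffAt hz
    (det_jacobian_chartSystem_ne_zero h isHomogeneous_lineFamily hz)

lemma exists_eventually_chartPoints_subset_closedBall (h : Nondegenerate (lineFamily A B t)) :
    ∃ R, ∀ᶠ s in 𝓝 t, Prod.mk s ⁻¹' chartIncidence A B ⊆ Metric.closedBall 0 R := by
  obtain ⟨R, hR⟩ := exists_eventually_forall_norm_le_of_apply_eq_one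
    (isClosed_setOf_mem_baseLocus_lineFamily A B)
    (fun c _ _ hz => smul_mem_baseLocus isHomogeneous_lineFamily c hz)
    (ContinuousLinearMap.proj (R := ℂ) (φ := fun _ => ℂ) (xIdx 0))
    (fun _ => h.eq_zero_of_mem_baseLocus_of_apply_xIdx_zero)
  exact ⟨R, hR.mono fun s hs z hz => mem_closedBall_zero_iff.2 (hs z hz.1 hz.2)⟩

variable (A B) in
lemma lineFamily_zero : lineFamily A B 0 = fun i => (A i : MvPolynomial (Fin (2 * r + 2)) ℂ) := by
  simp [lineFamily, _root_.funext_iff]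

variable (A B) in
lemma lineFamily_one : lineFamily A B 1 = fun i => (B i : MvPolynomial (Fin (2 * r + 2)) ℂ) := by
  simp [lineFamily, _root_.funext_iff]

theorem finite_chartPoints (hA : Nondegenerate fun i => (A i).1) :
    (chartPoints fun i => (A i).1).Finite := by
  rw [← lineFamily_zero A A] at hA ⊢
  obtain ⟨R, hR⟩ := exists_eventually_chartPoints_subset_closedBall hA
  exact finite_fiber_of_isGraphNear (isClosed_chartIncidence A A) (isCompact_closedBall 0 R)
    hR.self_of_nhds fun z hz => isGraphNear_chartIncidence hA hz

theorem ncard_chartPoints_eq (hA : Nondegenerate fun i => (A i).1)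
    (hB : Nondegenerate fun i => (B i).1) :
    (chartPoints fun i => (A i).1).ncard = (chartPoints fun i => (B i).1).ncard := by
  have preconnected : IsPreconnected {t | Nondegenerate (lineFamily A B t)} := by
    have := (isZariskiOpen_setOf_nondegenerate.finite_setOf_lineMap_notMem hA B).countable
      |>.isConnected_compl_of_one_lt_rank (by simp)
    simpa [Set.compl_ofPred] using! this.isPreconnected
  have locally_constant (t) (ht : Nondegenerate (lineFamily A B t)) :
      ContinuousAt (fun s => (chartPoints (lineFamily A B s)).ncard) t := by
    obtain ⟨R, hR⟩ := exists_eventually_chartPoints_subset_closedBall ht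
    exact continuousAt_const.congr_of_eventuallyEq <| eventually_ncard_fiber_eq
      (isClosed_chartIncidence A B) (isCompact_closedBall 0 R) hR
      fun z hz => isGraphNear_chartIncidence ht hz
  rw [← lineFamily_zero A B] at hA ⊢
  rw [← lineFamily_one A B] at hB ⊢
  exact preconnected.constant (fun t ht => (locally_constant t ht).continuousWithinAt) hA hB

end CountingOnTheChart

section Witness

variable {r : ℕ}

/-- The quadrics `x_i² - x₀² + x₀ y_i - y_i² / 3`, an explicit nondegenerate tuple: on `y = 0` they
cut out the `2 ^ r` points `(1 : ±1 : … : ±1)`. The terms in `y_i` make the equation along `y_i` of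
`blowupEq` a difference of two squares. -/
def witness (r : ℕ) (i : Fin r) : MvPolynomial (Fin (2 * r + 2)) ℂ :=
  X (xIdx i.succ) ^ 2 - X (xIdx 0) ^ 2 + X (xIdx 0) * X (yIdx i.succ) -
    C (1 / 3) * X (yIdx i.succ) ^ 2

lemma isHomogeneous_witness (i : Fin r) : (witness r i).IsHomogeneous 2 := by
  refine (((isHomogeneous_X_pow _ 2).sub (isHomogeneous_X_pow _ 2)).add
    ((isHomogeneous_X ..).mul (isHomogeneous_X ..))).sub ?_
  simpa using (isHomogeneous_C _ (1 / 3 : ℂ)).mul (isHomogeneous_X_pow (yIdx i.succ) 2)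

lemma eval_pderiv_witness_xIdx_zero (k : Fin r) (p : Fin (2 * r + 2) → ℂ) :
    eval p (pderiv (xIdx 0) (witness r k)) = p (yIdx k.succ) - 2 * p (xIdx 0) := by
  have cross_term : pderiv (xIdx 0) (X (xIdx 0) * X (yIdx k.succ) : MvPolynomial _ ℂ) =
      X (yIdx k.succ) := by simp [Derivation.leibniz]
  simp [witness, cross_term, neg_add_eq_sub]

lemma eval_pderiv_witness_xIdx_succ (i k : Fin r) (p : Fin (2 * r + 2) → ℂ) :
    eval p (pderiv (xIdx i.succ) (witness r k)) = if k = i then 2 * p (xIdx i.succ) else 0 := by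
  split_ifs with h <;>
    simp [witness, h, Derivation.leibniz, pderiv_X, eq_comm (a := (0 : Fin (r + 1)))]

lemma eval_pderiv_witness_yIdx_zero (k : Fin r) (p : Fin (2 * r + 2) → ℂ) :
    eval p (pderiv (yIdx 0) (witness r k)) = 0 := by
  simp [witness, Derivation.leibniz, pderiv_X]

lemma eval_pderiv_witness_yIdx_succ (i k : Fin r) (p : Fin (2 * r + 2) → ℂ) :
    eval p (pderiv (yIdx i.succ) (witness r k)) =
      if k = i then p (xIdx 0) - 2 / 3 * p (yIdx i.succ) else 0 := by
  split_ifs with h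
  · simp [witness, h, Derivation.leibniz, pderiv_X, div_eq_inv_mul, mul_assoc]
  · simp [witness, h, Derivation.leibniz, pderiv_X]

lemma blowupEq_witness (x : Fin (r + 1) → ℂ) (s : ℂ) (η : Fin (r + 1) → ℂ) :
    blowupEq (witness r) x s η =
      Sum.elim
        (Fin.cons (s * η 0 ^ 2 + ∑ k : Fin r, η k.succ * (s * η k.succ - 2 * x 0))
          fun i => 2 * (η i.succ * x i.succ))
        (Fin.cons (2 * (η 0 * x 0)) fun i => x i.succ ^ 2 - (x 0 - s * η i.succ) ^ 2) := by
  ext (j | j) <;> cases j using Fin.cases with | zero | succ i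
  · simp [blowupEq, partialComb, aeval_eq_eval, eval_pderiv_witness_xIdx_zero, Fin.tail]
  · simp [blowupEq, partialComb, aeval_eq_eval, eval_pderiv_witness_xIdx_succ, Fin.tail,
      mul_left_comm]
  · simp [blowupEq, partialComb, aeval_eq_eval, eval_pderiv_witness_yIdx_zero, mul_assoc]
  · have collapse : blowupEq (witness r) x s η (.inr i.succ) =
        eval (joinCoords x (s • η)) (witness r i) +
          s * (η i.succ * (x 0 - 2 / 3 * (s * η i.succ))) := by
      simp [blowupEq, partialComb, aeval_eq_eval, eval_pderiv_witness_yIdx_succ, Fin.tail]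
    rw [collapse]
    simp only [witness, map_sub, map_add, map_mul, map_pow, eval_X, eval_C, joinCoords_xIdx,
      joinCoords_yIdx, Pi.smul_apply, smul_eq_mul, Sum.elim_inr, Fin.cons_succ]
    ring

lemma nondegenerate_witness : Nondegenerate (witness r) := by
  intro x s η h
  simp only [blowupEq_witness, _root_.funext_iff, Sum.forall, Sum.elim_inl, Sum.elim_inr,
    Fin.forall_fin_succ (n := r), Fin.cons_zero, Fin.cons_succ, Pi.zero_apply, mul_eq_zero,
    two_ne_zero, false_or, sub_eq_zero] at h
  obtain ⟨⟨hx₀, hx⟩, hy₀, hy⟩ := h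
  simp only [_root_.funext_iff, Fin.forall_fin_succ (n := r), Pi.zero_apply]
  by_cases h₀ : x 0 = 0
  · have hxi (i : Fin r) : x i.succ = 0 := by
      rcases hx i with hηi | hxi
      · simpa [hηi, h₀] using hy i
      · exact hxi
    refine or_iff_not_imp_left.2 fun hs => ?_
    replace hs : s ≠ 0 := fun h => hs ⟨⟨h₀, hxi⟩, h⟩
    have hη (i : Fin r) : η i.succ = 0 := by simpa [h₀, hxi, hs] using (hy i).symm
    exact ⟨by simpa [hη, hs] using hx₀, hη⟩
  · -- Each nonzero `η_i` with `1 ≤ i` is `x₀ / s`, and the `η_i` add up to zero.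
    have hη₀ : η 0 = 0 := hy₀.resolve_right h₀
    have hη (i : Fin r) : η i.succ = 0 ∨ s * η i.succ = x 0 :=
      (hx i).imp_right fun hxi => (by simpa [hxi, sub_eq_zero] using (hy i).symm : x 0 = _).symm
    have sum_eta : ∑ i : Fin r, η i.succ = 0 := by
      have summand (i : Fin r) : η i.succ * (s * η i.succ - 2 * x 0) = -x 0 * η i.succ := by
        rcases hη i with h | h
        · simp [h]
        · rw [h]
          ring
      simpa [hη₀, summand, ← Finset.mul_sum, h₀] using hx₀
    have card_mul : (Finset.univ.filter fun i : Fin r => η i.succ ≠ 0).card * x 0 = 0 := by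
      calc
        _ = ∑ i : Fin r, if η i.succ ≠ 0 then x 0 else 0 := by simp [Finset.sum_ite]
        _ = ∑ i : Fin r, s * η i.succ := Finset.sum_congr rfl fun i _ => by
          split_ifs with h
          · exact ((hη i).resolve_left h).symm
          · simp [not_not.1 h]
        _ = 0 := by rw [← Finset.mul_sum, sum_eta, mul_zero]
    simpa [h₀, hη₀, Finset.filter_eq_empty_iff] using card_mul

lemma chartPoints_witness :
    chartPoints (witness r) =
      Set.range fun ε : Fin r → ℤˣ => joinCoords (Fin.cons 1 fun i => ((ε i : ℤ) : ℂ)) 0 := by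
  ext z
  simp only [chartPoints, Set.mem_ofPred_eq, mem_baseLocus_iff, Set.mem_range]
  constructor
  · rintro ⟨⟨hy, hQ⟩, h₀⟩
    have sign (i : Fin r) : ∃ u : ℤˣ, ((u : ℤ) : ℂ) = z (xIdx i.succ) := by
      have sq_eq_one : z (xIdx i.succ) ^ 2 = 1 := by
        simpa [witness, hy, h₀, sub_eq_zero] using hQ i
      rcases sq_eq_one_iff.1 sq_eq_one with h | h
      exacts [⟨1, by simp [h]⟩, ⟨-1, by simp [h]⟩]
    choose ε hε using sign
    refine ⟨ε, _root_.funext_iff.2 (forall_coord.2 ⟨Fin.cases ?_ ?_, ?_⟩)⟩ <;> simp [h₀, hε, hy]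
  · rintro ⟨ε, rfl⟩
    have sq_eq_one (i : Fin r) : ((ε i : ℤ) : ℂ) ^ 2 = 1 := by
      rcases Int.units_eq_one_or (ε i) with h | h <;> simp [h]
    simp [witness, sq_eq_one]

lemma ncard_chartPoints_witness : (chartPoints (witness r)).ncard = 2 ^ r := by
  rw [chartPoints_witness, ← Set.image_univ, Set.ncard_image_of_injective, Set.ncard_univ]
  · simp
  · intro ε ε' h
    ext i
    simpa using congrFun h (xIdx i.succ)

theorem ncard_chartPoints {A : Fin r → homogeneousSubmodule (Fin (2 * r + 2)) ℂ 2}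
    (hA : Nondegenerate fun i => (A i).1) : (chartPoints fun i => (A i).1).ncard = 2 ^ r :=
  (ncard_chartPoints_eq (B := fun i => ⟨witness r i, isHomogeneous_witness i⟩) hA
    nondegenerate_witness).trans ncard_chartPoints_witness

end Witness

/-- Let `Y_{2r} = {x_{r+1}² x₀ + x_{r+2} Q₁ + … + x_{2r+1} Q_r = 0} ⊆ ℙ^{2r+1}`
with `Q₁,…,Q_r` homogeneous quadrics. Every point with `x_{r+1} = … = x_{2r+1} = 0` and
`Q₁ = … = Q_r = 0` is a singular point of `Y_{2r}` (all partials vanish); and for general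
quadrics the converse holds and this singular locus is a finite set of exactly `2^r`
projective points. -/
theorem stmt15 (r : ℕ) (hr : 1 ≤ r) :
    (∀ Q : Fin r → MvPolynomial (Fin (2 * r + 2)) ℂ, (∀ i, (Q i).IsHomogeneous 2) →
      ∀ x : Fin (2 * r + 2) → ℂ,
        (∀ j : Fin (2 * r + 2), r + 1 ≤ (j : ℕ) → x j = 0) →
        (∀ i, eval x (Q i) = 0) →
        ∀ j, eval x (pderiv j (cubicForm r Q)) = 0) ∧
    ∃ U : Set (Fin r → homogeneousSubmodule (Fin (2 * r + 2)) ℂ 2),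
      IsZariskiOpen U ∧ U.Nonempty ∧
      ∀ Q ∈ U,
        (∀ x : Fin (2 * r + 2) → ℂ, x ≠ 0 →
          ((∀ j, eval x (pderiv j
              (cubicForm r (fun i => (Q i : MvPolynomial (Fin (2 * r + 2)) ℂ)))) = 0) ↔
            ((∀ j : Fin (2 * r + 2), r + 1 ≤ (j : ℕ) → x j = 0) ∧
              ∀ i, eval x ((Q i : MvPolynomial (Fin (2 * r + 2)) ℂ)) = 0))) ∧
        ({p : Projectivization ℂ (Fin (2 * r + 2) → ℂ) |
            (∀ j : Fin (2 * r + 2), r + 1 ≤ (j : ℕ) → p.rep j = 0) ∧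
            ∀ i, eval p.rep ((Q i : MvPolynomial (Fin (2 * r + 2)) ℂ)) = 0}).Finite ∧
        ({p : Projectivization ℂ (Fin (2 * r + 2) → ℂ) |
            (∀ j : Fin (2 * r + 2), r + 1 ≤ (j : ℕ) → p.rep j = 0) ∧
            ∀ i, eval p.rep ((Q i : MvPolynomial (Fin (2 * r + 2)) ℂ)) = 0}).ncard = 2 ^ r := by
  refine ⟨fun Q _ x hx hQ => eval_pderiv_cubicForm_eq_zero_of_mem_baseLocus ⟨hx, hQ⟩,
    {Q | Nondegenerate fun i => (Q i).1}, isZariskiOpen_setOf_nondegenerate,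
    ⟨fun i => ⟨witness r i, isHomogeneous_witness i⟩, nondegenerate_witness⟩, fun Q hQ => ?_⟩
  have projective_to_chart := bijOn_inv_smul_rep (ℓ := LinearMap.proj (xIdx 0))
    (fun c z hz => smul_mem_baseLocus (fun i => (Q i).2) c hz)
    fun z hz h₀ => hQ.eq_zero_of_mem_baseLocus_of_apply_xIdx_zero hz h₀
  exact ⟨fun x _ => ⟨hQ.mem_baseLocus, eval_pderiv_cubicForm_eq_zero_of_mem_baseLocus⟩,
    projective_to_chart.finite_iff_finite.2 (finite_chartPoints hQ),
    projective_to_chart.ncard_eq.trans (ncard_chartPoints hQ)⟩
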